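/- Let N ≥ 3 be an integer, a ∈ ℝ, and let f : ℝ → ℝ be continuous with f(0) = 0; set F(s) = ∫₀^s f(t) dt. Let u : ℝ^N → ℝ be a C² function satisfying −Δu(x) + a·u(x) = f(u(x)) for every x ∈ ℝ^N, and assume there are constants C, c > 0 such that |u(x)| + ‖∇u(x)‖ ≤ C·exp(−c‖x‖) for all x ∈ ℝ^N. Then ∫_{ℝ^N} ‖∇u‖² dx = N·L_a(u), where L_a(u) = (1/2)∫_{ℝ^N}(‖∇u‖² + a·u²) dx − ∫_{ℝ^N} F(u) dx. -/

import Mathlib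

open MeasureTheory Real

/-- The Laplacian of `u` at `x`: the trace of the second derivative,
computed as the sum of pure second derivatives along the coordinate directions. -/
noncomputable def lap {N : ℕ} (u : EuclideanSpace ℝ (Fin N) → ℝ)
    (x : EuclideanSpace ℝ (Fin N)) : ℝ :=
  ∑ i, iteratedFDeriv ℝ 2 u x ![EuclideanSpace.single i 1, EuclideanSpace.single i 1]

/-! The divergence of the vector field
`X = ⟪x, ∇u⟫ • ∇u + (G (u x) - ‖∇u‖² / 2) • x` is
`⟪x, ∇u⟫ (Δu + G' (u)) + (1 - n / 2) ‖∇u‖² + n G (u)`: the terms containing second derivatives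
other than `Δu` cancel by symmetry of the Hessian. Along a solution of `-Δu = G' (u)` the first
summand vanishes. Integrating against a cutoff `φ (ε x)` and letting `ε → 0`, the boundary term is
controlled by `‖X x‖ / (1 + ‖x‖)`, which is integrable as soon as `‖∇u‖²` and `G (u)` are. Hence
`(n - 2) ∫ ‖∇u‖² = 2 n ∫ G (u)`, and the theorem is the case `G s = F s - a s² / 2`. -/

open Filter Topology Module
open scoped Gradient Laplacian RealInnerProductSpace

section Divergence

variable {E : Type*} [NormedAddCommGroup E] [NormedSpace ℝ E]

/-- The divergence of a vector field, encoded without coordinates as the trace of its Fréchet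
derivative (so it has the junk value `0` where `X` is not differentiable, and in infinite
dimension). -/
noncomputable def divergence (X : E → E) (x : E) : ℝ :=
  LinearMap.trace ℝ E (fderiv ℝ X x)

theorem divergence_add {X Y : E → E} {x : E} (hX : DifferentiableAt ℝ X x)
    (hY : DifferentiableAt ℝ Y x) :
    divergence (fun y ↦ X y + Y y) x = divergence X x + divergence Y x := by
  simp [divergence, fderiv_fun_add hX hY]

variable [FiniteDimensional ℝ E]

theorem divergence_id (x : E) : divergence (fun y : E ↦ y) x = finrank ℝ E := by
  simp [divergence]

theorem divergence_smul {h : E → ℝ} {X : E → E} {x : E} (hh : DifferentiableAt ℝ h x)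
    (hX : DifferentiableAt ℝ X x) :
    divergence (fun y ↦ h y • X y) x = fderiv ℝ h x (X x) + h x * divergence X x := by
  have hrank := LinearMap.trace_smulRight (fderiv ℝ h x : E →ₗ[ℝ] ℝ) (X x)
  simp only [divergence, fderiv_fun_smul hh hX, ContinuousLinearMap.toLinearMap_add,
    ContinuousLinearMap.toLinearMap_smul, map_add, map_smul, smul_eq_mul]
  rw [add_comm]
  exact congrArg (· + _) hrank

theorem divergence_eq_sum_fderiv_coord {ι : Type*} [Fintype ι] (b : Basis ι ℝ E) {X : E → E}
    {x : E} (hX : DifferentiableAt ℝ X x) :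
    divergence X x = ∑ i, fderiv ℝ (fun y ↦ b.coord i (X y)) x (b i) := by
  classical
  have hcoord (i : ι) (v : E) :
      fderiv ℝ (fun y ↦ b.coord i (X y)) x v = b.coord i (fderiv ℝ X x v) :=
    congr($(((b.coord i).toContinuousLinearMap.hasFDerivAt.comp x hX.hasFDerivAt).fderiv) v)
  simp only [divergence, LinearMap.trace_eq_matrix_trace ℝ b, Matrix.trace, Matrix.diag,
    LinearMap.toMatrix_apply, hcoord, ContinuousLinearMap.coe_coe]
  rfl

variable [MeasurableSpace E] [BorelSpace E] {μ : Measure E} [μ.IsAddHaarMeasure]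

theorem integral_mul_divergence_eq_neg_integral_fderiv {η : E → ℝ} {X : E → E}
    (hη : ContDiff ℝ 1 η) (hηc : HasCompactSupport η) (hX : ContDiff ℝ 1 X) :
    ∫ x, η x * divergence X x ∂μ = -∫ x, fderiv ℝ η x (X x) ∂μ := by
  let b := finBasis ℝ E
  have hXi (i) : ContDiff ℝ 1 fun x ↦ b.coord i (X x) :=
    (b.coord i).toContinuousLinearMap.contDiff.comp hX
  have hdη (i) : Continuous fun x ↦ fderiv ℝ η x (b i) :=
    (hη.continuous_fderiv one_ne_zero).clm_apply continuous_const
  have hdX (i) : Continuous fun x ↦ fderiv ℝ (fun y ↦ b.coord i (X y)) x (b i) :=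
    ((hXi i).continuous_fderiv one_ne_zero).clm_apply continuous_const
  have hint (i) : Integrable (fun x ↦ η x * fderiv ℝ (fun y ↦ b.coord i (X y)) x (b i)) μ :=
    (hη.continuous.mul (hdX i)).integrable_of_hasCompactSupport hηc.mul_right
  have hint' (i) : Integrable (fun x ↦ fderiv ℝ η x (b i) * b.coord i (X x)) μ :=
    ((hdη i).mul (hXi i).continuous).integrable_of_hasCompactSupport
      (hηc.fderiv_apply ℝ _).mul_right
  have hexpand (x : E) : fderiv ℝ η x (X x) = ∑ i, fderiv ℝ η x (b i) * b.coord i (X x) := by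
    conv_lhs => rw [← b.sum_repr (X x), map_sum]
    simp only [map_smul, smul_eq_mul, mul_comm, Basis.coord_apply]
  simp_rw [divergence_eq_sum_fderiv_coord b (hX.differentiable one_ne_zero _), hexpand,
    Finset.mul_sum]
  rw [integral_finsetSum _ fun i _ ↦ hint i, integral_finsetSum _ fun i _ ↦ hint' i,
    ← Finset.sum_neg_distrib]
  refine Finset.sum_congr rfl fun i _ ↦
    integral_mul_fderiv_eq_neg_fderiv_mul_of_integrable (hint' i) (hint i)
      ((hη.continuous.mul (hXi i).continuous).integrable_of_hasCompactSupport hηc.mul_right)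
      (fun x _ ↦ hη.differentiable one_ne_zero x)
      (fun x _ ↦ (hXi i).differentiable one_ne_zero x)

end Divergence

section Cutoff

variable {E : Type*} [NormedAddCommGroup E] [NormedSpace ℝ E]

theorem tendsto_smul_nhdsGT_zero (x : E) :
    Tendsto (fun ε : ℝ ↦ ε • x) (𝓝[>] 0) (𝓝 0) := by
  have hid : Tendsto id (𝓝[>] (0 : ℝ)) (𝓝 0) := tendsto_id.mono_left nhdsWithin_le_nhds
  simpa using hid.smul_const x

theorem tendsto_fderiv_comp_smul_nhdsGT_zero {φ : E → ℝ} (hφ : ContDiff ℝ 1 φ) (x : E) :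
    Tendsto (fun ε : ℝ ↦ fderiv ℝ (fun y ↦ φ (ε • y)) x) (𝓝[>] 0) (𝓝 0) := by
  simp_rw [fderiv_comp_smul]
  have hdφ := ((hφ.continuous_fderiv one_ne_zero).tendsto 0).comp (tendsto_smul_nhdsGT_zero x)
  simpa using (tendsto_id.mono_left nhdsWithin_le_nhds).smul hdφ

theorem exists_norm_fderiv_comp_smul_le {φ : E → ℝ} (hφ : ContDiff ℝ 1 φ)
    (hφc : HasCompactSupport φ) :
    ∃ K, ∀ ε ∈ Set.Ioc (0 : ℝ) 1, ∀ x,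
      ‖fderiv ℝ (fun y ↦ φ (ε • y)) x‖ ≤ K * (1 + ‖x‖)⁻¹ := by
  obtain ⟨K, hK⟩ := ((hφc.fderiv ℝ).smul_left (f := fun y ↦ 1 + ‖y‖)).exists_bound_of_continuous
    (by have := hφ.continuous_fderiv one_ne_zero; fun_prop)
  refine ⟨K, fun ε ⟨hε, hε1⟩ x ↦ ?_⟩
  have hKx : (1 + ‖ε • x‖) * ‖fderiv ℝ φ (ε • x)‖ ≤ K := by
    simpa [norm_smul, abs_of_nonneg (by positivity : 0 ≤ 1 + |ε| * ‖x‖)] using hK (ε • x)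
  rw [fderiv_comp_smul, norm_smul, Real.norm_of_nonneg hε.le, ← div_eq_mul_inv,
    le_div_iff₀ (by positivity)]
  calc ε * ‖fderiv ℝ φ (ε • x)‖ * (1 + ‖x‖)
      = (ε + ε * ‖x‖) * ‖fderiv ℝ φ (ε • x)‖ := by ring
    _ ≤ (1 + ‖ε • x‖) * ‖fderiv ℝ φ (ε • x)‖ := by
      rw [norm_smul, Real.norm_of_nonneg hε.le]; gcongr
    _ ≤ K := hKx

variable [MeasurableSpace E] [BorelSpace E] {μ : Measure E}

theorem tendsto_integral_comp_smul_mul {φ h : E → ℝ} (hφ : Continuous φ)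
    (hφc : HasCompactSupport φ) (hh : Integrable h μ) :
    Tendsto (fun ε : ℝ ↦ ∫ x, φ (ε • x) * h x ∂μ) (𝓝[>] 0) (𝓝 (∫ x, φ 0 * h x ∂μ)) := by
  obtain ⟨K, hK⟩ := hφc.exists_bound_of_continuous hφ
  refine tendsto_integral_filter_of_dominated_convergence (fun x ↦ K * ‖h x‖) ?_ ?_
    (hh.norm.const_mul K) ?_
  · exact .of_forall fun ε ↦
      (hφ.comp (continuous_const_smul ε)).aestronglyMeasurable.mul hh.aestronglyMeasurable
  · refine .of_forall fun ε ↦ .of_forall fun x ↦ ?_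
    rw [norm_mul]
    gcongr
    exact hK _
  · exact .of_forall fun x ↦
      ((hφ.tendsto 0).comp (tendsto_smul_nhdsGT_zero x)).mul_const _

theorem tendsto_integral_fderiv_comp_smul_apply {φ : E → ℝ} {X : E → E} (hφ : ContDiff ℝ 1 φ)
    (hφc : HasCompactSupport φ) (hX : Continuous X)
    (hXi : Integrable (fun x ↦ (1 + ‖x‖)⁻¹ • X x) μ) :
    Tendsto (fun ε : ℝ ↦ ∫ x, fderiv ℝ (fun y ↦ φ (ε • y)) x (X x) ∂μ) (𝓝[>] 0) (𝓝 0) := by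
  obtain ⟨K, hK⟩ := exists_norm_fderiv_comp_smul_le hφ hφc
  suffices Tendsto (fun ε : ℝ ↦ ∫ x, fderiv ℝ (fun y ↦ φ (ε • y)) x (X x) ∂μ) (𝓝[>] 0)
      (𝓝 (∫ _, (0 : ℝ) ∂μ)) by simpa
  refine tendsto_integral_filter_of_dominated_convergence
    (fun x ↦ K * ‖(1 + ‖x‖)⁻¹ • X x‖) ?_ ?_ (hXi.norm.const_mul K) ?_
  · refine .of_forall fun ε ↦ Continuous.aestronglyMeasurable ?_
    have hφε : ContDiff ℝ 1 fun y ↦ φ (ε • y) := hφ.comp (contDiff_const_smul ε)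
    exact (hφε.continuous_fderiv one_ne_zero).clm_apply hX
  · filter_upwards [Ioc_mem_nhdsGT zero_lt_one] with ε hε
    refine .of_forall fun x ↦ (ContinuousLinearMap.le_of_opNorm_le _ (hK ε hε x) _).trans_eq ?_
    rw [norm_smul, norm_inv, Real.norm_of_nonneg (by positivity), mul_assoc]
  · refine .of_forall fun x ↦ ?_
    have hev := (ContinuousLinearMap.apply ℝ ℝ (X x)).continuous.tendsto (0 : E →L[ℝ] ℝ)
    exact hev.comp (tendsto_fderiv_comp_smul_nhdsGT_zero hφ x)

theorem integral_divergence_eq_zero [FiniteDimensional ℝ E] [μ.IsAddHaarMeasure] {X : E → E}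
    (hX : ContDiff ℝ 1 X) (hXi : Integrable (fun x ↦ (1 + ‖x‖)⁻¹ • X x) μ)
    (hdiv : Integrable (divergence X) μ) :
    ∫ x, divergence X x ∂μ = 0 := by
  obtain ⟨φ, -, hφc, hφ, -, hφ0⟩ :=
    exists_contDiff_tsupport_subset (n := 1) (univ_mem (f := 𝓝 (0 : E)))
  have hmain := tendsto_integral_comp_smul_mul hφ.continuous hφc hdiv
  have hboundary := (tendsto_integral_fderiv_comp_smul_apply hφ hφc hX.continuous hXi).neg
  have hparts : (fun ε : ℝ ↦ ∫ x, φ (ε • x) * divergence X x ∂μ) =ᶠ[𝓝[>] 0]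
      fun ε ↦ -∫ x, fderiv ℝ (fun y ↦ φ (ε • y)) x (X x) ∂μ := by
    filter_upwards [self_mem_nhdsWithin] with ε hε
    exact integral_mul_divergence_eq_neg_integral_fderiv (hφ.comp (contDiff_const_smul ε))
      (hφc.comp_smul (ne_of_gt hε)) hX
  simpa [hφ0] using tendsto_nhds_unique (hmain.congr' hparts) hboundary

end Cutoff

section Gradient

variable {E : Type*} [NormedAddCommGroup E] [InnerProductSpace ℝ E] [CompleteSpace E]

theorem contDiffAt_gradient {u : E → ℝ} {x : E} {m n : WithTop ℕ∞} (hu : ContDiffAt ℝ n u x)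
    (hmn : m + 1 ≤ n) : ContDiffAt ℝ m (∇ u) x :=
  (InnerProductSpace.toDual ℝ E).symm.contDiff.contDiffAt.comp x (hu.fderiv_right hmn)

theorem contDiff_gradient {u : E → ℝ} {m n : WithTop ℕ∞} (hu : ContDiff ℝ n u) (hmn : m + 1 ≤ n) :
    ContDiff ℝ m (∇ u) :=
  (InnerProductSpace.toDual ℝ E).symm.contDiff.comp (hu.fderiv_right hmn)

theorem inner_fderiv_gradient {u : E → ℝ} {x : E} (v w : E) :
    ⟪fderiv ℝ (∇ u) x v, w⟫ = fderiv ℝ (fderiv ℝ u) x v w := by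
  let L : StrongDual ℝ E ≃L[ℝ] E := (InnerProductSpace.toDual ℝ E).symm.toContinuousLinearEquiv
  have hcomp : fderiv ℝ (∇ u) x = (L : StrongDual ℝ E →L[ℝ] E) ∘L fderiv ℝ (fderiv ℝ u) x :=
    L.comp_fderiv
  rw [hcomp]
  exact InnerProductSpace.toDual_symm_apply

theorem inner_fderiv_gradient_comm {u : E → ℝ} {x : E} (hu : ContDiffAt ℝ 2 u x) (v w : E) :
    ⟪fderiv ℝ (∇ u) x v, w⟫ = ⟪v, fderiv ℝ (∇ u) x w⟫ := by
  rw [real_inner_comm _ v, inner_fderiv_gradient, inner_fderiv_gradient]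
  exact hu.isSymmSndFDerivAt (by simp) v w

end Gradient

theorem divergence_gradient {E : Type*} [NormedAddCommGroup E] [InnerProductSpace ℝ E]
    [FiniteDimensional ℝ E] (u : E → ℝ) (x : E) : divergence (∇ u) x = Δ u x := by
  simp [divergence, LinearMap.trace_eq_sum_inner _ (stdOrthonormalBasis ℝ E),
    InnerProductSpace.laplacian_eq_iteratedFDeriv_stdOrthonormalBasis, iteratedFDeriv_two_apply,
    ← inner_fderiv_gradient, real_inner_comm]

theorem contDiff_one_integral {f : ℝ → ℝ} (hf : Continuous f) (a : ℝ) :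
    ContDiff ℝ 1 fun s ↦ ∫ t in a..s, f t := by
  have hderiv : deriv (fun s ↦ ∫ t in a..s, f t) = f := funext (hf.deriv_integral f a)
  exact contDiff_one_iff_deriv.2
    ⟨intervalIntegral.differentiable_integral_of_continuous hf, hderiv.symm ▸ hf⟩

section PohozaevField

variable {E : Type*} [NormedAddCommGroup E] [InnerProductSpace ℝ E] [CompleteSpace E]
  {G : ℝ → ℝ} {u : E → ℝ}

/-- The vector field behind the Pohozaev identity: the flux associated with the infinitesimal
dilation `x ↦ ⟪x, ∇u⟫` of the Lagrangian `‖∇u‖² / 2 - G (u)`. -/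
noncomputable def pohozaevField (G : ℝ → ℝ) (u : E → ℝ) (x : E) : E :=
  ⟪x, ∇ u x⟫ • ∇ u x + (G (u x) - 2⁻¹ * ‖∇ u x‖ ^ 2) • x

theorem contDiff_pohozaevField (hG : ContDiff ℝ 1 G) (hu : ContDiff ℝ 2 u) :
    ContDiff ℝ 1 (pohozaevField G u) := by
  have hgrad : ContDiff ℝ 1 (∇ u) := contDiff_gradient hu one_add_one_eq_two.le
  have hu1 : ContDiff ℝ 1 u := hu.of_le one_le_two
  exact ((contDiff_id.inner ℝ hgrad).smul hgrad).add
    (((hG.comp hu1).sub (contDiff_const.mul (hgrad.norm_sq ℝ))).smul contDiff_id)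

theorem norm_pohozaevField_le (x : E) :
    ‖pohozaevField G u x‖ ≤ ‖x‖ * (2 * ‖∇ u x‖ ^ 2 + |G (u x)|) := by
  have hinner : |⟪x, ∇ u x⟫| ≤ ‖x‖ * ‖∇ u x‖ := abs_real_inner_le_norm _ _
  have hcoef : |G (u x) - 2⁻¹ * ‖∇ u x‖ ^ 2| ≤ |G (u x)| + ‖∇ u x‖ ^ 2 :=
    (abs_sub _ _).trans <| by
      gcongr
      rw [abs_of_nonneg (by positivity)]
      linarith [sq_nonneg ‖∇ u x‖]
  calc ‖pohozaevField G u x‖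
      ≤ |⟪x, ∇ u x⟫| * ‖∇ u x‖ + |G (u x) - 2⁻¹ * ‖∇ u x‖ ^ 2| * ‖x‖ := by
        rw [← Real.norm_eq_abs, ← Real.norm_eq_abs, ← norm_smul, ← norm_smul]
        exact norm_add_le _ _
    _ ≤ ‖x‖ * ‖∇ u x‖ * ‖∇ u x‖ + (|G (u x)| + ‖∇ u x‖ ^ 2) * ‖x‖ := by gcongr
    _ = ‖x‖ * (2 * ‖∇ u x‖ ^ 2 + |G (u x)|) := by ring

end PohozaevField

section PohozaevIdentity

variable {E : Type*} [NormedAddCommGroup E] [InnerProductSpace ℝ E] [FiniteDimensional ℝ E]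
  {G : ℝ → ℝ} {u : E → ℝ}

theorem divergence_inner_smul_gradient {x : E} (hu : ContDiffAt ℝ 2 u x) :
    divergence (fun y ↦ ⟪y, ∇ u y⟫ • ∇ u y) x =
      ‖∇ u x‖ ^ 2 + ⟪∇ u x, fderiv ℝ (∇ u) x x⟫ + ⟪x, ∇ u x⟫ * Δ u x := by
  have hgrad : DifferentiableAt ℝ (∇ u) x :=
    (contDiffAt_gradient hu one_add_one_eq_two.le).differentiableAt one_ne_zero
  rw [divergence_smul (differentiableAt_fun_id.inner ℝ hgrad) hgrad, divergence_gradient,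
    fderiv_inner_apply ℝ differentiableAt_fun_id hgrad, fderiv_fun_id,
    ContinuousLinearMap.id_apply, real_inner_self_eq_norm_sq, real_inner_comm,
    inner_fderiv_gradient_comm hu]
  ring

theorem divergence_neg_lagrangian_smul {x : E} (hG : DifferentiableAt ℝ G (u x))
    (hu : DifferentiableAt ℝ u x) (hgrad : DifferentiableAt ℝ (∇ u) x) :
    divergence (fun y ↦ (G (u y) - 2⁻¹ * ‖∇ u y‖ ^ 2) • y) x =
      deriv G (u x) * ⟪x, ∇ u x⟫ - ⟪∇ u x, fderiv ℝ (∇ u) x x⟫ +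
        (G (u x) - 2⁻¹ * ‖∇ u x‖ ^ 2) * finrank ℝ E := by
  have hlagrangian : HasFDerivAt (fun y ↦ G (u y) - 2⁻¹ * ‖∇ u y‖ ^ 2) _ x :=
    (hG.hasDerivAt.comp_hasFDerivAt x hu.hasFDerivAt).sub
      (hgrad.hasFDerivAt.norm_sq.const_mul 2⁻¹)
  rw [divergence_smul hlagrangian.differentiableAt differentiableAt_fun_id, divergence_id,
    hlagrangian.fderiv, real_inner_comm, inner_gradient_left]
  simp

theorem divergence_pohozaevField (hG : Differentiable ℝ G) (hu : ContDiff ℝ 2 u) (x : E) :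
    divergence (pohozaevField G u) x = ⟪x, ∇ u x⟫ * (Δ u x + deriv G (u x)) +
      (1 - finrank ℝ E / 2) * ‖∇ u x‖ ^ 2 + finrank ℝ E * G (u x) := by
  have hgrad : Differentiable ℝ (∇ u) :=
    (contDiff_gradient hu one_add_one_eq_two.le).differentiable one_ne_zero
  have hu' : Differentiable ℝ u := hu.differentiable two_ne_zero
  have hradial : DifferentiableAt ℝ (fun y ↦ ⟪y, ∇ u y⟫ • ∇ u y) x :=
    (differentiableAt_fun_id.inner ℝ (hgrad x)).smul (hgrad x)
  have hdilation : DifferentiableAt ℝ (fun y ↦ (G (u y) - 2⁻¹ * ‖∇ u y‖ ^ 2) • y) x :=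
    (((hG.comp hu') x).sub (((hgrad x).norm_sq ℝ).const_mul 2⁻¹)).smul differentiableAt_fun_id
  unfold pohozaevField
  rw [divergence_add hradial hdilation, divergence_inner_smul_gradient hu.contDiffAt,
    divergence_neg_lagrangian_smul (hG _) (hu' x) (hgrad x)]
  ring

variable [MeasurableSpace E] [BorelSpace E] {μ : Measure E}

theorem integrable_smul_pohozaevField (hG : ContDiff ℝ 1 G) (hu : ContDiff ℝ 2 u)
    (hgrad : Integrable (fun x ↦ ‖∇ u x‖ ^ 2) μ) (hGu : Integrable (fun x ↦ G (u x)) μ) :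
    Integrable (fun x ↦ (1 + ‖x‖)⁻¹ • pohozaevField G u x) μ := by
  refine ((hgrad.const_mul 2).add hGu.abs).mono' ?_ (.of_forall fun x ↦ ?_)
  · have hweight : Continuous fun x : E ↦ (1 + ‖x‖)⁻¹ :=
      Continuous.inv₀ (by fun_prop) fun x ↦ by positivity
    exact (hweight.smul (contDiff_pohozaevField hG hu).continuous).aestronglyMeasurable
  · rw [norm_smul, norm_inv, Real.norm_of_nonneg (by positivity), inv_mul_le_iff₀ (by positivity)]
    refine (norm_pohozaevField_le x).trans ?_
    dsimp
    gcongr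
    linarith

variable [μ.IsAddHaarMeasure]

theorem pohozaev_identity (hG : ContDiff ℝ 1 G) (hu : ContDiff ℝ 2 u)
    (heq : ∀ x, -Δ u x = deriv G (u x)) (hgrad : Integrable (fun x ↦ ‖∇ u x‖ ^ 2) μ)
    (hGu : Integrable (fun x ↦ G (u x)) μ) :
    (finrank ℝ E - 2) * ∫ x, ‖∇ u x‖ ^ 2 ∂μ = 2 * finrank ℝ E * ∫ x, G (u x) ∂μ := by
  have hdiv : divergence (pohozaevField G u) = fun x ↦
      (1 - finrank ℝ E / 2) * ‖∇ u x‖ ^ 2 + finrank ℝ E * G (u x) := by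
    ext x
    simp [divergence_pohozaevField (hG.differentiable one_ne_zero) hu, ← heq]
  have hgrad' := hgrad.const_mul (1 - finrank ℝ E / 2 : ℝ)
  have hGu' := hGu.const_mul (finrank ℝ E : ℝ)
  have hzero := integral_divergence_eq_zero (contDiff_pohozaevField hG hu)
    (integrable_smul_pohozaevField hG hu hgrad hGu) (hdiv ▸ hgrad'.add hGu')
  rw [hdiv, integral_add hgrad' hGu', integral_const_mul, integral_const_mul] at hzero
  linarith

theorem grad_energy_eq_N_times_energy_general {a : ℝ} {f : ℝ → ℝ} (hf : Continuous f) {F : ℝ → ℝ}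
    (hF : ∀ s, F s = ∫ t in (0 : ℝ)..s, f t) (hu : ContDiff ℝ 2 u)
    (heq : ∀ x, -Δ u x + a * u x = f (u x)) (hgrad : Integrable (fun x ↦ ‖∇ u x‖ ^ 2) μ)
    (hu2 : Integrable (fun x ↦ a * u x ^ 2) μ) (hFu : Integrable (fun x ↦ F (u x)) μ) :
    ∫ x, ‖∇ u x‖ ^ 2 ∂μ =
      finrank ℝ E * (1 / 2 * (∫ x, (‖∇ u x‖ ^ 2 + a * u x ^ 2) ∂μ) - ∫ x, F (u x) ∂μ) := by
  obtain rfl : F = fun s ↦ ∫ t in (0 : ℝ)..s, f t := funext hF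
  have hFC := contDiff_one_integral hf 0
  let G : ℝ → ℝ := fun s ↦ (∫ t in (0 : ℝ)..s, f t) - a * s ^ 2 / 2
  have hG : ContDiff ℝ 1 G := by fun_prop
  have hderiv (s : ℝ) : deriv G s = f s - a * s := by
    have hG' : HasDerivAt G _ s := (hf.integral_hasStrictDerivAt 0 s).hasDerivAt.sub
      (((hasDerivAt_pow 2 s).const_mul a).div_const 2)
    rw [hG'.deriv]
    ring
  have hpohozaev := pohozaev_identity hG hu (fun x ↦ by rw [hderiv, ← heq]; ring) hgrad
    (hFu.sub (hu2.div_const 2))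
  rw [integral_sub hFu (hu2.div_const 2), integral_div] at hpohozaev
  rw [integral_add hgrad hu2]
  linarith

end PohozaevIdentity

section ExponentialDecay

variable {E : Type*} [NormedAddCommGroup E] [NormedSpace ℝ E] [FiniteDimensional ℝ E]
  [MeasurableSpace E] [BorelSpace E] (μ : Measure E) [μ.IsAddHaarMeasure]

theorem integrable_exp_neg_mul_norm {c : ℝ} (hc : 0 < c) :
    Integrable (fun x : E ↦ exp (-c * ‖x‖)) μ := by
  have hcont : Continuous fun x : E ↦ exp (-c * ‖x‖) := by fun_prop
  have hshift : Tendsto (fun x : E ↦ 1 + ‖x‖) (cocompact E) atTop :=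
    tendsto_atTop_add_const_left _ _ tendsto_norm_cocompact_atTop
  have hO := ((isLittleO_exp_neg_mul_rpow_atTop hc (-(finrank ℝ E + 1))).comp_tendsto
    hshift).isBigO.const_mul_left (exp c)
  refine hcont.locallyIntegrable.integrable_of_isBigO_cocompact (hO.congr_left fun x ↦ ?_)
    ((integrable_one_add_norm (lt_add_one _)).integrableAtFilter _)
  rw [Function.comp_apply, ← exp_add]
  congr 1
  ring

variable {μ}

theorem integrable_comp_of_le_exp_neg_norm {v : E → ℝ} {Φ : ℝ → ℝ} {C c : ℝ} (hv : Continuous v)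
    (hc : 0 < c) (hdecay : ∀ x, |v x| ≤ C * exp (-c * ‖x‖)) (hΦ : LocallyLipschitz Φ)
    (hΦ0 : Φ 0 = 0) : Integrable (fun x ↦ Φ (v x)) μ := by
  have hC : 0 ≤ C := by simpa using (abs_nonneg _).trans (hdecay 0)
  have hexp (x : E) : exp (-c * ‖x‖) ≤ 1 := exp_le_one_iff.2 (by nlinarith [norm_nonneg x])
  obtain ⟨K, hK⟩ := hΦ.locallyLipschitzOn.exists_lipschitzOnWith_of_compact
    (isCompact_Icc (a := -C) (b := C))
  refine ((integrable_exp_neg_mul_norm μ hc).const_mul (K * C)).mono'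
    (hΦ.continuous.comp hv).aestronglyMeasurable (.of_forall fun x ↦ ?_)
  have hvx : v x ∈ Set.Icc (-C) C :=
    abs_le.1 ((hdecay x).trans (mul_le_of_le_one_right hC (hexp x)))
  calc ‖Φ (v x)‖ ≤ K * |v x| := by
        simpa [hΦ0] using hK.norm_sub_le hvx ⟨neg_nonpos.2 hC, hC⟩
    _ ≤ K * C * exp (-c * ‖x‖) := by rw [mul_assoc]; gcongr; exact hdecay x

end ExponentialDecay

theorem integrable_energy_densities_of_le_exp_neg_norm {E : Type*} [NormedAddCommGroup E]
    [InnerProductSpace ℝ E] [FiniteDimensional ℝ E] [MeasurableSpace E] [BorelSpace E]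
    {μ : Measure E} [μ.IsAddHaarMeasure] {u : E → ℝ} {F : ℝ → ℝ} {C c : ℝ} (hu : ContDiff ℝ 1 u)
    (hc : 0 < c) (hdecay : ∀ x, |u x| + ‖∇ u x‖ ≤ C * exp (-c * ‖x‖)) (hF : LocallyLipschitz F)
    (hF0 : F 0 = 0) :
    Integrable (fun x ↦ ‖∇ u x‖ ^ 2) μ ∧ Integrable (fun x ↦ u x ^ 2) μ ∧
      Integrable (fun x ↦ F (u x)) μ := by
  have hu_decay (x) : |u x| ≤ C * exp (-c * ‖x‖) :=
    (le_add_of_nonneg_right (norm_nonneg _)).trans (hdecay x)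
  have hgrad_decay (x) : |‖∇ u x‖| ≤ C * exp (-c * ‖x‖) :=
    (abs_norm _).trans_le ((le_add_of_nonneg_left (abs_nonneg _)).trans (hdecay x))
  have hgrad : Continuous (∇ u) := (contDiff_gradient hu (zero_add 1).le).continuous
  have hsq : LocallyLipschitz fun s : ℝ ↦ s ^ 2 :=
    ((contDiff_id (𝕜 := ℝ)).pow 2).locallyLipschitz
  exact ⟨integrable_comp_of_le_exp_neg_norm hgrad.norm hc hgrad_decay hsq (zero_pow two_ne_zero),
    integrable_comp_of_le_exp_neg_norm hu.continuous hc hu_decay hsq (zero_pow two_ne_zero),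
    integrable_comp_of_le_exp_neg_norm hu.continuous hc hu_decay hF hF0⟩

theorem lap_eq_laplacian {N : ℕ} (u : EuclideanSpace ℝ (Fin N) → ℝ) : lap u = Δ u := by
  rw [InnerProductSpace.laplacian_eq_iteratedFDeriv_orthonormalBasis u
    (EuclideanSpace.basisFun (Fin N) ℝ)]
  simp [funext_iff, lap]

theorem grad_energy_eq_N_times_energy {N : ℕ} (hN : 3 ≤ N) (a : ℝ) (f : ℝ → ℝ)
    (hf : Continuous f) (hf0 : f 0 = 0)
    (F : ℝ → ℝ) (hF : ∀ s : ℝ, F s = ∫ t in (0:ℝ)..s, f t)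
    (u : EuclideanSpace ℝ (Fin N) → ℝ) (hu : ContDiff ℝ 2 u)
    (heq : ∀ x, -lap u x + a * u x = f (u x))
    (C c : ℝ) (hC : 0 < C) (hc : 0 < c)
    (hdecay : ∀ x, |u x| + ‖gradient u x‖ ≤ C * Real.exp (-c * ‖x‖)) :
    ∫ x, ‖gradient u x‖ ^ 2 =
      (N : ℝ) * ((1 / 2) * (∫ x, (‖gradient u x‖ ^ 2 + a * u x ^ 2))
        - ∫ x, F (u x)) := by
  have hFC : ContDiff ℝ 1 F := funext hF ▸ contDiff_one_integral hf 0
  obtain ⟨hgrad, hu2, hFu⟩ := integrable_energy_densities_of_le_exp_neg_norm (μ := volume)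
    (hu.of_le one_le_two) hc hdecay hFC.locallyLipschitz (by simp [hF])
  simpa using grad_energy_eq_N_times_energy_general hf hF hu
    (fun x ↦ lap_eq_laplacian u ▸ heq x) hgrad (hu2.const_mul a) hFu
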